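/- arXiv:1902.09034 — 2 statements merged into one kernel-verified Lean document; each statement's English description precedes it below -/
import Mathlib

section
/- Let m, n be positive integers, A ∈ M_{n,m}(𝔽_q((z⁻¹))) and θ = (θ_1, …, θ_n)ᵀ ∈ 𝔽_q((z⁻¹))ⁿ. Then the following are equivalent: (1) for every ε > 0 there exists a polynomial vector x ∈ 𝔽_q[z]^m such that ⟨Ax − θ⟩ ≤ ε; (2) for every polynomial vector u = (u_1, …, u_n)ᵀ ∈ 𝔽_q[z]ⁿ such that Aᵀu ∈ 𝔽_q[z]^m, one has u_1θ_1 + ⋯ + u_nθ_n ∈ 𝔽_q[z]. -/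
/-!
Common setup: the field `𝔽_q((z⁻¹))` of formal power series over a finite field `K` of
cardinality `q`, modeled as the field `FF K` of formal Laurent series in `t = z⁻¹`,
together with its non-Archimedean norm, the embedding of the polynomial ring `𝔽_q[z]`,
distances to polynomial (vectors), Diophantine exponents, `Bad` sets, continued fractions
and best approximation sequences.
-/

open scoped Classical ENNReal NNReal
open Filter

noncomputable section

set_option linter.unusedSectionVars false

namespace FPSDA

variable (K : Type*) [Field K] [Fintype K]

/-- The field `𝔽_q((z⁻¹))` of formal power series in `z⁻¹` over the finite field `K = 𝔽_q`,
modeled as the field of formal Laurent series in the variable `t = z⁻¹`. -/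
def FF : Type _ := LaurentSeries K

instance : Field (FF K) := inferInstanceAs (Field (LaurentSeries K))

variable {K}

/-- The identity map, viewing an element of `𝔽_q((z⁻¹))` as a Laurent series in `t = z⁻¹`. -/
def toL (x : FF K) : LaurentSeries K := x

@[simp] lemma toL_zero : toL (0 : FF K) = 0 := rfl
@[simp] lemma toL_add (x y : FF K) : toL (x + y) = toL x + toL y := rfl
@[simp] lemma toL_neg (x : FF K) : toL (-x) = -toL x := rfl
@[simp] lemma toL_sub (x y : FF K) : toL (x - y) = toL x - toL y := rfl
lemma toL_eq_zero {x : FF K} : toL x = 0 ↔ x = 0 := Iff.rfl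

/-- The norm `‖x‖ = q ^ (deg x)` on `𝔽_q((z⁻¹))`, where
`deg x = - (order of x as a Laurent series in z⁻¹)`; `‖0‖ = 0`. -/
def fnorm (x : FF K) : ℝ :=
  if toL x = 0 then 0 else (Fintype.card K : ℝ) ^ (-(toL x).order)

lemma one_le_q : (1 : ℝ) ≤ (Fintype.card K : ℝ) := by
  exact_mod_cast Fintype.card_pos

lemma fnorm_nonneg (x : FF K) : 0 ≤ fnorm x := by
  unfold fnorm
  split_ifs
  · exact le_refl 0
  · exact zpow_nonneg (by positivity) _

lemma fnorm_eq_zero {x : FF K} : fnorm x = 0 ↔ x = 0 := by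
  unfold fnorm
  split_ifs with h
  · exact ⟨fun _ => toL_eq_zero.mp h, fun _ => rfl⟩
  · constructor
    · intro hc
      exact absurd hc (zpow_ne_zero _ (by
        have h0 : (0:ℝ) < (Fintype.card K : ℝ) := by positivity
        exact ne_of_gt h0))
    · intro hc
      exact absurd (toL_eq_zero.mpr hc) h

lemma fnorm_neg (x : FF K) : fnorm (-x) = fnorm x := by
  unfold fnorm
  rw [toL_neg]
  simp [neg_eq_zero, HahnSeries.order_neg]

lemma fnorm_add_le (x y : FF K) : fnorm (x + y) ≤ max (fnorm x) (fnorm y) := by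
  by_cases hxy : x + y = 0
  · rw [fnorm_eq_zero.mpr hxy]
    exact le_max_of_le_left (fnorm_nonneg x)
  by_cases hx : x = 0
  · rw [hx, zero_add]
    exact le_max_right _ _
  by_cases hy : y = 0
  · rw [hy, add_zero]
    exact le_max_left _ _
  have horder : min (toL x).order (toL y).order ≤ (toL (x + y)).order := by
    rw [toL_add]
    exact HahnSeries.min_order_le_order_add (show toL x + toL y ≠ 0 from hxy)
  have h1 : fnorm (x + y) = (Fintype.card K : ℝ) ^ (-(toL (x+y)).order) := by
    unfold fnorm
    rw [if_neg (show toL (x + y) ≠ 0 from hxy)]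
  rcases le_total (toL x).order (toL y).order with h | h
  · have h2 : (toL x).order ≤ (toL (x+y)).order := le_trans (by simp [min_eq_left h]) horder
    refine le_max_of_le_left ?_
    rw [h1]
    unfold fnorm
    rw [if_neg (show toL x ≠ 0 from hx)]
    exact zpow_le_zpow_right₀ one_le_q (by omega)
  · have h2 : (toL y).order ≤ (toL (x+y)).order := le_trans (by simp [min_eq_right h]) horder
    refine le_max_of_le_right ?_
    rw [h1]
    unfold fnorm
    rw [if_neg (show toL y ≠ 0 from hy)]
    exact zpow_le_zpow_right₀ one_le_q (by omega)

/-- The (ultra)metric `dist x y = ‖x - y‖` on `𝔽_q((z⁻¹))`. -/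
instance : MetricSpace (FF K) where
  dist x y := fnorm (x - y)
  dist_self x := by
    show fnorm (x - x) = 0
    rw [sub_self]
    exact fnorm_eq_zero.mpr rfl
  dist_comm x y := by
    show fnorm (x - y) = fnorm (y - x)
    have h : x - y = -(y - x) := by ring
    rw [h, fnorm_neg]
  dist_triangle x y z := by
    show fnorm (x - z) ≤ fnorm (x - y) + fnorm (y - z)
    have h : x - z = (x - y) + (y - z) := by ring
    calc fnorm (x - z) ≤ max (fnorm (x - y)) (fnorm (y - z)) := by
          rw [h]; exact fnorm_add_le _ _
      _ ≤ fnorm (x - y) + fnorm (y - z) :=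
        max_le (le_add_of_nonneg_right (fnorm_nonneg _)) (le_add_of_nonneg_left (fnorm_nonneg _))
  eq_of_dist_eq_zero := by
    intro x y h
    have h' : x - y = 0 := fnorm_eq_zero.mp h
    exact sub_eq_zero.mp h'

instance : MeasurableSpace (FF K) := borel _
instance : BorelSpace (FF K) := ⟨rfl⟩

/-- The canonical embedding of the polynomial ring `𝔽_q[z]` into `𝔽_q((z⁻¹))`:
the variable `z` is sent to `t⁻¹ = single (-1) 1`. -/
def polyF (P : Polynomial K) : FF K :=
  Polynomial.aeval (HahnSeries.single (-1 : ℤ) (1 : K)) P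

/-- Supremum norm of a vector with entries in `𝔽_q((z⁻¹))`. -/
def vnorm {ι : Type*} [Fintype ι] (v : ι → FF K) : ℝ := ⨆ i, fnorm (v i)

/-- `⟨v⟩`, the distance from the vector `v` to the nearest polynomial vector. -/
def vdist {ι : Type*} [Fintype ι] (v : ι → FF K) : ℝ :=
  ⨅ y : ι → Polynomial K, vnorm (fun i => v i - polyF (y i))

/-- `⟨x⟩`, the distance from the scalar `x` to the nearest polynomial. -/
def sdist (x : FF K) : ℝ := ⨅ y : Polynomial K, fnorm (x - polyF y)

/-- The fractional part `{x} = Σ_{i ≥ 1} a_i z^{-i}` of `x = Σ_i a_i z^{-i}`. -/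
def fracPart (x : FF K) : FF K :=
  (⟨fun i => if 1 ≤ i then (toL x).coeff i else 0, (toL x).isPWO_support'.mono (by
      intro i hi
      by_cases h : (1:ℤ) ≤ i
      · simpa [Function.mem_support, h] using hi
      · simp [Function.mem_support, h] at hi)⟩ : LaurentSeries K)

/-- The integer part `[x] = Σ_{i ≤ 0} a_i z^{-i}` of `x = Σ_i a_i z^{-i}`, as a polynomial
in `z`. -/
def intPoly (x : FF K) : Polynomial K :=
  ∑ i ∈ Finset.range ((-(toL x).order).toNat + 1),
    Polynomial.monomial i ((toL x).coeff (-(i : ℤ)))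

/-- `x ∈ 𝔽_q((z⁻¹))` is irrational if it is not in `𝔽_q(z)`, i.e. is not a ratio of two
polynomials in `z`. -/
def FIrrational (x : FF K) : Prop :=
  ∀ P Q : Polynomial K, Q ≠ 0 → x * polyF Q ≠ polyF P

section Exponents

variable {m n : ℕ}

/-- The norm `‖x‖ = max_j ‖x_j‖` of a polynomial vector `x`. -/
def pnorm {ι : Type*} [Fintype ι] (x : ι → Polynomial K) : ℝ :=
  vnorm (fun i => (polyF (x i) : FF K))

/-- The system `⟨A x - θ⟩ ≤ H^{-ω}`, `‖x‖ ≤ H` has a polynomial solution `x`. -/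
def Solv (A : Matrix (Fin n) (Fin m) (FF K)) (θ : Fin n → FF K) (ω H : ℝ) : Prop :=
  ∃ x : Fin m → Polynomial K,
    vdist (A.mulVec (fun j => polyF (x j)) - θ) ≤ H ^ (-ω) ∧ pnorm x ≤ H

/-- The system `⟨A x⟩ ≤ H^{-ω}`, `‖x‖ ≤ H` has a nonzero polynomial solution `x`. -/
def SolvHom (A : Matrix (Fin n) (Fin m) (FF K)) (ω H : ℝ) : Prop :=
  ∃ x : Fin m → Polynomial K, x ≠ 0 ∧
    vdist (A.mulVec (fun j => polyF (x j))) ≤ H ^ (-ω) ∧ pnorm x ≤ H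

/-- The inhomogeneous exponent `ω(A, θ)`: the supremum (in `[0,∞]`) of all `ω` such that
for arbitrarily large `H` the system `⟨A x - θ⟩ ≤ H^{-ω}`, `‖x‖ ≤ H` has a polynomial
solution. -/
def omegaInhom (A : Matrix (Fin n) (Fin m) (FF K)) (θ : Fin n → FF K) : ℝ≥0∞ :=
  ⨆ (ω : ℝ) (_ : ∀ H₀ : ℝ, ∃ H : ℝ, H₀ ≤ H ∧ Solv A θ ω H), ENNReal.ofReal ω

/-- The uniform inhomogeneous exponent `ω̂(A, θ)`: as `ω(A, θ)`, but with a solution for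
all sufficiently large `H`. -/
def omegaHatInhom (A : Matrix (Fin n) (Fin m) (FF K)) (θ : Fin n → FF K) : ℝ≥0∞ :=
  ⨆ (ω : ℝ) (_ : ∃ H₀ : ℝ, ∀ H : ℝ, H₀ ≤ H → Solv A θ ω H), ENNReal.ofReal ω

/-- The homogeneous exponent `ω(A)`. -/
def omegaHom (A : Matrix (Fin n) (Fin m) (FF K)) : ℝ≥0∞ :=
  ⨆ (ω : ℝ) (_ : ∀ H₀ : ℝ, ∃ H : ℝ, H₀ ≤ H ∧ SolvHom A ω H), ENNReal.ofReal ω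

/-- The uniform homogeneous exponent `ω̂(A)`. -/
def omegaHatHom (A : Matrix (Fin n) (Fin m) (FF K)) : ℝ≥0∞ :=
  ⨆ (ω : ℝ) (_ : ∃ H₀ : ℝ, ∀ H : ℝ, H₀ ≤ H → SolvHom A ω H), ENNReal.ofReal ω

/-- `A` is non-degenerate: the `𝔽_q[z]`-module `Aᵀ 𝔽_q[z]ⁿ + 𝔽_q[z]^m ⊆ 𝔽_q((z⁻¹))^m` has
rank `m + n` over `𝔽_q[z]`, i.e. its `m + n` natural generators are linearly independent
over `𝔽_q[z]`; equivalently, no nonzero polynomial vector `u` makes `Aᵀ u` a polynomial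
vector. -/
def Nondegenerate (A : Matrix (Fin n) (Fin m) (FF K)) : Prop :=
  ∀ u : Fin n → Polynomial K,
    (∃ v : Fin m → Polynomial K,
      A.transpose.mulVec (fun i => polyF (u i)) = fun j => polyF (v j)) → u = 0

/-- `liminf_{x ∈ 𝔽_q[z]^m, ‖x‖ → ∞} ‖x‖^{m/n} ⟨A x - θ⟩`, computed in `[0, ∞]`. -/
def badLiminf (A : Matrix (Fin n) (Fin m) (FF K)) (θ : Fin n → FF K) : ℝ≥0∞ :=
  Filter.liminf
    (fun x : Fin m → Polynomial K =>
      ENNReal.ofReal ((pnorm x) ^ ((m : ℝ) / (n : ℝ)) *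
        vdist (A.mulVec (fun j => polyF (x j)) - θ)))
    (Filter.comap (fun x : Fin m → Polynomial K => pnorm x) Filter.atTop)

/-- The set `Bad^ε(A)` of `θ` in the unit polydisc `𝕀ⁿ` with
`liminf_{‖x‖ → ∞} ‖x‖^{m/n} ⟨A x - θ⟩ ≥ ε`. -/
def Bad (A : Matrix (Fin n) (Fin m) (FF K)) (ε : ℝ) : Set (Fin n → FF K) :=
  {θ | (∀ i, fnorm (θ i) < 1) ∧ ENNReal.ofReal ε ≤ badLiminf A θ}

/-- The set `Bad(A) = ⋃_{ε > 0} Bad^ε(A)`. -/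
def BadAll (A : Matrix (Fin n) (Fin m) (FF K)) : Set (Fin n → FF K) :=
  ⋃ (ε : ℝ) (_ : 0 < ε), Bad A ε

/-- `M(y) = ⟨Aᵀ y⟩` for a polynomial vector `y`. -/
def Mfun (A : Matrix (Fin n) (Fin m) (FF K)) (y : Fin n → Polynomial K) : ℝ :=
  vdist (A.transpose.mulVec (fun i => polyF (y i)))

/-- `y 1, y 2, …` is a sequence of best approximations related to `Aᵀ`:
`1 = Y_1 < Y_2 < ⋯`, `M_1 > M_2 > ⋯`, and `M(x) ≥ M_k` for every nonzero polynomial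
vector `x` with `‖x‖ < Y_{k+1}` (the value `y 0` is irrelevant). -/
def IsBestApproxSeq (A : Matrix (Fin n) (Fin m) (FF K))
    (y : ℕ → Fin n → Polynomial K) : Prop :=
  pnorm (y 1) = 1 ∧
  (∀ k, 1 ≤ k → pnorm (y k) < pnorm (y (k + 1))) ∧
  (∀ k, 1 ≤ k → Mfun A (y (k + 1)) < Mfun A (y k)) ∧
  (∀ k, 1 ≤ k → ∀ x : Fin n → Polynomial K, x ≠ 0 → pnorm x < pnorm (y (k + 1)) →
    Mfun A (y k) ≤ Mfun A x)

end Exponents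

section Scalar

/-- The system `⟨ξ x - θ⟩ ≤ H^{-ω}`, `‖x‖ ≤ H` has a polynomial solution `x`. -/
def sSolv (ξ θ : FF K) (ω H : ℝ) : Prop :=
  ∃ x : Polynomial K, sdist (ξ * polyF x - θ) ≤ H ^ (-ω) ∧ fnorm (polyF x) ≤ H

/-- The scalar inhomogeneous exponent `ω((ξ), θ)`. -/
def somegaInhom (ξ θ : FF K) : ℝ≥0∞ :=
  ⨆ (ω : ℝ) (_ : ∀ H₀ : ℝ, ∃ H : ℝ, H₀ ≤ H ∧ sSolv ξ θ ω H), ENNReal.ofReal ω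

/-- The scalar uniform inhomogeneous exponent `ω̂((ξ), θ)`. -/
def somegaHatInhom (ξ θ : FF K) : ℝ≥0∞ :=
  ⨆ (ω : ℝ) (_ : ∃ H₀ : ℝ, ∀ H : ℝ, H₀ ≤ H → sSolv ξ θ ω H), ENNReal.ofReal ω

/-- The scalar homogeneous exponent `ω((ξ))`. -/
def somegaHom (ξ : FF K) : ℝ≥0∞ :=
  ⨆ (ω : ℝ) (_ : ∀ H₀ : ℝ, ∃ H : ℝ, H₀ ≤ H ∧ ∃ x : Polynomial K, x ≠ 0 ∧
      sdist (ξ * polyF x) ≤ H ^ (-ω) ∧ fnorm (polyF x) ≤ H), ENNReal.ofReal ω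

/-- `liminf_{x ∈ 𝔽_q[z], ‖x‖ → ∞} ‖x‖ ⟨α x - θ⟩`, computed in `[0, ∞]`. -/
def sBadLiminf (α θ : FF K) : ℝ≥0∞ :=
  Filter.liminf
    (fun x : Polynomial K => ENNReal.ofReal (fnorm (polyF x) * sdist (α * polyF x - θ)))
    (Filter.comap (fun x : Polynomial K => fnorm (polyF x)) Filter.atTop)

/-- The set `Bad^ε(α)` of `θ ∈ 𝕀` with `liminf_{‖x‖ → ∞} ‖x‖ ⟨α x - θ⟩ ≥ ε`. -/
def sBad (α : FF K) (ε : ℝ) : Set (FF K) :=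
  {θ | fnorm θ < 1 ∧ ENNReal.ofReal ε ≤ sBadLiminf α θ}

end Scalar

section CF

/-- The Gauss map `T x = 1/x - [1/x]` on `𝔽_q((z⁻¹))`. -/
def gaussMap (x : FF K) : FF K := fracPart x⁻¹

/-- `pquot α k` is the `(k+1)`-st partial quotient `A_{k+1} = [1 / T^k α]` of the
continued fraction expansion of `α`. -/
def pquot (α : FF K) (k : ℕ) : Polynomial K := intPoly ((gaussMap^[k] α)⁻¹)

/-- `cfQ α k` is the denominator `Q_k` of the `k`-th convergent of the continued fraction
expansion of `α`: `Q_0 = 1`, `Q_1 = A_1`, `Q_{k+2} = A_{k+2} Q_{k+1} + Q_k`. -/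
def cfQ (α : FF K) : ℕ → Polynomial K
  | 0 => 1
  | 1 => pquot α 0
  | (k + 2) => pquot α (k + 1) * cfQ α (k + 1) + cfQ α k

/-- `α` is singular on average: for every `c > 0` the proportion of `l ∈ {1, …, N}` for
which `‖{Q α}‖ ≤ c 2^{-l}` has a solution `Q ∈ 𝔽_q[z]` with `0 < ‖Q‖ ≤ 2^l` tends to `1`
as `N → ∞`. -/
def SingularOnAverage (α : FF K) : Prop :=
  ∀ c : ℝ, 0 < c →
    Filter.Tendsto
      (fun N : ℕ =>
        (((Finset.Icc 1 N).filter (fun l : ℕ =>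
            ∃ Q : Polynomial K, Q ≠ 0 ∧ fnorm (polyF Q) ≤ 2 ^ l ∧
              fnorm (fracPart (polyF Q * α)) ≤ c / 2 ^ l)).card : ℝ) / (N : ℝ))
      Filter.atTop (nhds 1)

end CF

end FPSDA

open FPSDA MeasureTheory

namespace FPSDA

def cf {K : Type*} [Field K] [Fintype K] (k : ℤ) : FF K →+ K where
  toFun x := (toL x).coeff k
  map_zero' := by simp
  map_add' x y := by simp

lemma polyF_add' {K : Type*} [Field K] [Fintype K] (P Q : Polynomial K) :
    polyF (P + Q) = polyF P + polyF Q := map_add (Polynomial.aeval (R := K) (HahnSeries.single (-1 : ℤ) (1 : K))) P Q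

lemma polyF_mul' {K : Type*} [Field K] [Fintype K] (P Q : Polynomial K) :
    polyF (P * Q) = polyF P * polyF Q := map_mul (Polynomial.aeval (R := K) (HahnSeries.single (-1 : ℤ) (1 : K))) P Q

lemma polyF_zero' {K : Type*} [Field K] [Fintype K] : polyF (0 : Polynomial K) = 0 :=
  map_zero (Polynomial.aeval (R := K) (HahnSeries.single (-1 : ℤ) (1 : K)))

lemma polyF_sum' {K ι : Type*} [Field K] [Fintype K] (s : Finset ι) (f : ι → Polynomial K) :
    polyF (∑ i ∈ s, f i) = ∑ i ∈ s, polyF (f i) :=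
  map_sum (Polynomial.aeval (R := K) (HahnSeries.single (-1 : ℤ) (1 : K))) f s

lemma polyF_monomial {K : Type*} [Field K] [Fintype K] (l : ℕ) (a : K) :
    polyF (Polynomial.monomial l a) = (HahnSeries.single (-(l : ℤ)) a : LaurentSeries K) := by
  have h : polyF (Polynomial.monomial l a) = (algebraMap K (HahnSeries ℤ K) a) *
      (HahnSeries.single (-1 : ℤ) (1 : K)) ^ l :=
    Polynomial.aeval_monomial (A := LaurentSeries K) (HahnSeries.single (-1 : ℤ) (1 : K))
  have h2 : algebraMap K (HahnSeries ℤ K) a = HahnSeries.single 0 a := by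
    rw [HahnSeries.algebraMap_apply']
    exact HahnSeries.ofPowerSeries_C a
  rw [h, h2, HahnSeries.single_pow, HahnSeries.single_mul_single]
  simp
  rfl

lemma cf_monomial_mul {K : Type*} [Field K] [Fintype K] (k : ℤ) (l : ℕ) (a : K) (x : FF K) :
    cf k (polyF (Polynomial.monomial l a) * x) = a * cf (k + l) x := by
  rw [polyF_monomial]
  show ((HahnSeries.single (-(l : ℤ)) a : LaurentSeries K) * toL x).coeff k = a * (toL x).coeff (k + l)
  rw [HahnSeries.coeff_single_mul]
  simp

lemma cf_monomial {K : Type*} [Field K] [Fintype K] (k : ℤ) (l : ℕ) (a : K) :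
    cf k (polyF (Polynomial.monomial l a)) = if k = -(l : ℤ) then a else 0 := by
  rw [polyF_monomial]
  show (HahnSeries.single (-(l : ℤ)) a : LaurentSeries K).coeff k = _
  rw [HahnSeries.coeff_single]
  congr

lemma cf_poly {K : Type*} [Field K] [Fintype K] (k : ℤ) (hk : 1 ≤ k) (P : Polynomial K) :
    cf k (polyF P) = 0 := by
  rw [P.as_sum_range, polyF_sum', map_sum]
  refine Finset.sum_eq_zero fun i _ => ?_
  rw [cf_monomial, if_neg (by omega)]

lemma cf_mul_zero {K : Type*} [Field K] [Fintype K] (k : ℤ) (P : Polynomial K) (x : FF K)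
    (h : ∀ j : ℤ, j ≤ k + P.natDegree → cf j x = 0) : cf k (polyF P * x) = 0 := by
  rw [P.as_sum_range, polyF_sum', Finset.sum_mul, map_sum]
  refine Finset.sum_eq_zero fun i hi => ?_
  have := Finset.mem_range.mp hi
  rw [cf_monomial_mul, h _ (by omega), mul_zero]

lemma cf_sub_intPoly {K : Type*} [Field K] [Fintype K] (x : FF K) (k : ℤ) (hk : k ≤ 0) :
    cf k (x - polyF (intPoly x)) = 0 := by
  rw [map_sub, sub_eq_zero]
  unfold intPoly
  rw [polyF_sum', map_sum]
  simp only [cf_monomial]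
  by_cases h : k < (toL x).order
  · have h0 : cf k x = 0 := HahnSeries.coeff_eq_zero_of_lt_order h
    rw [h0]
    symm
    refine Finset.sum_eq_zero fun i _ => ?_
    split_ifs with h1
    · rw [← h1]; exact h0
    · rfl
  · rw [Finset.sum_eq_single (-k).toNat]
    · have h2 : k = -((-k).toNat : ℤ) := by omega
      rw [if_pos h2, ← h2]; rfl
    · intro b _ hb
      rw [if_neg (by omega)]
    · intro hb
      exact absurd (Finset.mem_range.mpr (by omega)) hb

lemma eq_of_cf {K : Type*} [Field K] [Fintype K] (x : FF K) (h : ∀ k, cf k x = 0) : x = 0 := by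
  have : toL x = 0 := by
    ext k
    exact h k
  exact this

lemma exists_poly {K : Type*} [Field K] [Fintype K] (x : FF K) (h : ∀ k : ℕ, cf ((k : ℤ) + 1) x = 0) :
    ∃ P, x = polyF P := by
  refine ⟨intPoly x, sub_eq_zero.mp (eq_of_cf _ fun k => ?_)⟩
  by_cases hk : k ≤ 0
  · exact cf_sub_intPoly x k hk
  · rw [map_sub, cf_poly k (by omega), sub_zero]
    have := h (k - 1).toNat
    rwa [show (((k - 1).toNat : ℕ) : ℤ) + 1 = k by omega] at this

lemma one_lt_q (K : Type*) [Field K] [Fintype K] : (1 : ℝ) < Fintype.card K := by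
  exact_mod_cast Fintype.one_lt_card

lemma cf_of_fnorm {K : Type*} [Field K] [Fintype K] (x : FF K) (N : ℤ)
    (h : fnorm x < (Fintype.card K : ℝ) ^ (-N)) (k : ℤ) (hk : k ≤ N) : cf k x = 0 := by
  by_contra hne
  have hx : toL x ≠ 0 := by
    rintro h0
    apply hne
    show (toL x).coeff k = 0
    rw [h0]; rfl
  have ho : (toL x).order ≤ k := HahnSeries.order_le_of_coeff_ne_zero hne
  unfold fnorm at h
  rw [if_neg hx, zpow_lt_zpow_iff_right₀ (one_lt_q K)] at h
  omega

lemma fnorm_of_cf {K : Type*} [Field K] [Fintype K] (x : FF K) (N : ℤ)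
    (h : ∀ k ≤ N, cf k x = 0) : fnorm x ≤ (Fintype.card K : ℝ) ^ (-N) := by
  unfold fnorm
  split_ifs with hx
  · exact zpow_nonneg (by positivity) _
  · apply zpow_le_zpow_right₀ one_le_q
    by_contra hc
    exact HahnSeries.coeff_order_eq_zero.not.mpr hx (h _ (by omega))

end FPSDA


/-- **Kronecker's theorem** over the field of formal power series `𝔽_q((z⁻¹))`:
for `A ∈ M_{n,m}(𝔽_q((z⁻¹)))` and `θ ∈ 𝔽_q((z⁻¹))ⁿ`, the values `A x` with `x` a polynomial
vector approximate `θ` modulo polynomial vectors arbitrarily well if and only if every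
polynomial vector `u` with `Aᵀ u` a polynomial vector satisfies
`u₁θ₁ + ⋯ + u_nθ_n ∈ 𝔽_q[z]`. -/
theorem kronecker_theorem {K : Type*} [Field K] [Fintype K] {m n : ℕ}
    (hm : 0 < m) (hn : 0 < n)
    (A : Matrix (Fin n) (Fin m) (FF K)) (θ : Fin n → FF K) :
    (∀ ε : ℝ, 0 < ε →
        ∃ x : Fin m → Polynomial K, vdist (A.mulVec (fun j => polyF (x j)) - θ) ≤ ε) ↔
      (∀ u : Fin n → Polynomial K,
        (∃ w : Fin m → Polynomial K,
            A.transpose.mulVec (fun i => polyF (u i)) = fun j => polyF (w j)) →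
        ∃ P : Polynomial K, (∑ i, polyF (u i) * θ i) = polyF P) := by
  have hq := one_lt_q K
  haveI : Nonempty (Fin n) := ⟨⟨0, hn⟩⟩
  constructor
  · rintro h1 u ⟨w, hw⟩
    suffices h : ∀ k : ℕ, cf ((k : ℤ) + 1) (∑ i, polyF (u i) * θ i) = 0 from exists_poly _ h
    intro k
    let D : ℕ := ∑ i, (u i).natDegree
    have hD : ∀ i, (u i).natDegree ≤ D := fun i =>
      Finset.single_le_sum (f := fun i => (u i).natDegree) (fun _ _ => Nat.zero_le _) (Finset.mem_univ i)
    have hpos : (0 : ℝ) < (Fintype.card K : ℝ) ^ (-((k : ℤ) + 1 + D)) := zpow_pos (by linarith) _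
    obtain ⟨x, hx⟩ := h1 _ (half_pos hpos)
    obtain ⟨y, hy⟩ := exists_lt_of_ciInf_lt (lt_of_le_of_lt hx (half_lt_self hpos))
    have hz : ∀ i, ∀ j ≤ (k : ℤ) + 1 + D,
        cf j ((A.mulVec (fun j => polyF (x j)) - θ) i - polyF (y i)) = 0 := by
      intro i j hj
      refine cf_of_fnorm _ _ (lt_of_le_of_lt ?_ hy) j hj
      exact le_ciSup (f := fun i => fnorm ((A.mulVec (fun j => polyF (x j)) - θ) i - polyF (y i)))
        (Set.finite_range _).bddAbove i
    have key : ∑ i, polyF (u i) * θ i = polyF (∑ j, w j * x j) - polyF (∑ i, u i * y i)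
        - ∑ i, polyF (u i) * ((A.mulVec (fun j => polyF (x j)) - θ) i - polyF (y i)) := by
      have e1 : ∑ i, polyF (u i) * (A.mulVec (fun j => polyF (x j))) i = polyF (∑ j, w j * x j) := by
        have := Matrix.dotProduct_mulVec (fun i => polyF (u i)) A (fun j => polyF (x j))
        rw [← Matrix.mulVec_transpose, hw] at this
        simp only [polyF_sum', polyF_mul']
        exact this
      simp only [Pi.sub_apply, mul_sub, Finset.sum_sub_distrib]
      rw [e1]
      simp only [polyF_sum', polyF_mul']
      ring
    rw [key, map_sub, map_sub, cf_poly _ (by omega), cf_poly _ (by omega), map_sum]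
    rw [Finset.sum_eq_zero, sub_zero, sub_zero]
    intro i _
    refine cf_mul_zero _ _ _ fun j hj => hz i j ?_
    have := hD i
    omega
  · intro h2 ε hε
    obtain ⟨N, hN⟩ := exists_pow_lt_of_lt_one hε (inv_lt_one_of_one_lt₀ hq)
    have hN' : (Fintype.card K : ℝ) ^ (-(N : ℤ)) ≤ ε := by
      rw [zpow_neg, zpow_natCast, ← inv_pow]; exact hN.le
    let Φ : (Fin m → Polynomial K) →ₗ[K] (Fin n × Fin N → K) :=
      { toFun := fun x p => cf (1 + ((p.2 : ℕ) : ℤ)) (A.mulVec (fun j => polyF (x j)) p.1)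
        map_add' := by
          intro x y
          funext p
          simp only [Matrix.mulVec, dotProduct, Pi.add_apply, polyF_add', mul_add,
            Finset.sum_add_distrib, map_add]
        map_smul' := by
          intro a x
          funext p
          simp only [Matrix.mulVec, dotProduct, Pi.smul_apply, map_sum, RingHom.id_apply,
            smul_eq_mul, Finset.mul_sum]
          refine Finset.sum_congr rfl fun j _ => ?_
          rw [← Polynomial.C_mul', ← Polynomial.monomial_zero_left, polyF_mul', mul_left_comm,
            cf_monomial_mul]
          simp }
    let τ : Fin n × Fin N → K := fun p => cf (1 + ((p.2 : ℕ) : ℤ)) (θ p.1)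
    have hτ : τ ∈ LinearMap.range Φ := by
      by_contra hn
      obtain ⟨f, hf, hfk⟩ := Submodule.exists_le_ker_of_notMem hn
      let c : Fin n × Fin N → K := fun p => f (fun j => if p = j then 1 else 0)
      let u : Fin n → Polynomial K := fun i => ∑ k : Fin N, Polynomial.monomial (k : ℕ) (c (i, k))
      have hu : ∀ v : Fin n → FF K,
          f (fun p => cf (1 + ((p.2 : ℕ) : ℤ)) (v p.1)) = cf 1 (∑ i, polyF (u i) * v i) := by
        intro v
        rw [LinearMap.pi_apply_eq_sum_univ f, Fintype.sum_prod_type, map_sum]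
        refine Finset.sum_congr rfl fun i _ => ?_
        simp only [u, polyF_sum', Finset.sum_mul, map_sum, cf_monomial_mul]
        refine Finset.sum_congr rfl fun k _ => ?_
        rw [smul_eq_mul, mul_comm]
      have hA : ∀ j, ∃ P, A.transpose.mulVec (fun i => polyF (u i)) j = polyF P := by
        intro j
        refine exists_poly _ fun k => ?_
        let x : Fin m → Polynomial K := Pi.single j (Polynomial.monomial k 1)
        have h0 : f (Φ x) = 0 := hfk ⟨x, rfl⟩
        have h1 : f (Φ x) = _ := hu (A.mulVec (fun j => polyF (x j)))
        have h3 := Matrix.dotProduct_mulVec (fun i => polyF (u i)) A (fun j => polyF (x j))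
        rw [← Matrix.mulVec_transpose] at h3
        have hx : (fun j => polyF (x j)) = Pi.single j (polyF (Polynomial.monomial k 1)) := by
          funext j'
          by_cases hj : j' = j
          · subst hj; simp [x]
          · simp [x, hj, polyF_zero']
        rw [h0] at h1
        change 0 = cf 1 (dotProduct (fun i => polyF (u i)) (A.mulVec (fun j => polyF (x j)))) at h1
        rw [h3, hx, dotProduct_single, mul_comm, cf_monomial_mul, one_mul] at h1
        rw [add_comm]; exact h1.symm
      choose w hw using hA
      obtain ⟨P, hP⟩ := h2 u ⟨w, funext hw⟩
      apply hf
      rw [show f τ = _ from hu θ, hP, cf_poly 1 le_rfl]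
    obtain ⟨x, hx⟩ := hτ
    refine ⟨x, le_trans ?_ hN'⟩
    set v := A.mulVec (fun j => polyF (x j)) - θ with hv
    refine le_trans (ciInf_le ⟨0, ?_⟩ (fun i => intPoly (v i))) ?_
    · rintro _ ⟨y, rfl⟩
      exact Real.iSup_nonneg fun i => fnorm_nonneg _
    · refine ciSup_le fun i => fnorm_of_cf _ _ fun k hk => ?_
      by_cases hk0 : k ≤ 0
      · exact cf_sub_intPoly _ _ hk0
      · rw [map_sub, cf_poly k (by omega), sub_zero, hv, Pi.sub_apply, map_sub, sub_eq_zero]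
        have := congrFun hx (i, ⟨(k - 1).toNat, by omega⟩)
        have e : (1 : ℤ) + ((k - 1).toNat : ℤ) = k := by omega
        simp only [Φ, τ, LinearMap.coe_mk, AddHom.coe_mk, e] at this
        exact this
end
end

section
/- Let m, n be positive integers, A ∈ M_{n,m}(𝔽_q((z⁻¹))) and θ ∈ 𝔽_q((z⁻¹))ⁿ. If θ does not belong to A𝔽_q[z]^m + 𝔽_q[z]ⁿ, then ω̂(A, θ) ≤ ω(A). -/
/-!
Common setup: the field `𝔽_q((z⁻¹))` of formal power series over a finite field `K` of
cardinality `q`, modeled as the field `FF K` of formal Laurent series in `t = z⁻¹`,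
together with its non-Archimedean norm, the embedding of the polynomial ring `𝔽_q[z]`,
distances to polynomial (vectors), Diophantine exponents, `Bad` sets, continued fractions
and best approximation sequences.
-/

open scoped Classical ENNReal NNReal
open Filter

noncomputable section

set_option linter.unusedSectionVars false

namespace FPSDA

section Aux

variable {K : Type*} [Field K] [Fintype K]

lemma aux_polyF_sub (P Q : Polynomial K) : polyF (P - Q) = polyF P - polyF Q :=
  map_sub (Polynomial.aeval (HahnSeries.single (-1 : ℤ) (1 : K))) P Q

lemma aux_fnorm_sub_le (x y : FF K) : fnorm (x - y) ≤ max (fnorm x) (fnorm y) := by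
  rw [sub_eq_add_neg, ← fnorm_neg y]
  exact fnorm_add_le _ _

lemma aux_algebraMap (a : K) :
    algebraMap K (LaurentSeries K) a = HahnSeries.C a := by
  first
  | rfl
  | (rw [HahnSeries.algebraMap_apply']; simp)

lemma aux_coeff (P : Polynomial K) (k : ℕ) :
    (toL (polyF P)).coeff (-(k : ℤ)) = P.coeff k := by
  show HahnSeries.coeff (Polynomial.aeval (HahnSeries.single (-1 : ℤ) (1 : K)) P :
    LaurentSeries K) (-(k : ℤ)) = P.coeff k
  induction P using Polynomial.induction_on' with
  | add p q hp hq => rw [map_add, HahnSeries.coeff_add, hp, hq, Polynomial.coeff_add]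
  | monomial i a =>
    rw [Polynomial.aeval_monomial, HahnSeries.single_pow, Polynomial.coeff_monomial,
      aux_algebraMap, HahnSeries.C_apply, HahnSeries.single_mul_single, HahnSeries.coeff_single]
    simp [eq_comm]

lemma aux_poly_small (P : Polynomial K) (h : fnorm (polyF P) < 1) : P = 0 := by
  ext k
  rw [← aux_coeff, Polynomial.coeff_zero]
  by_cases h0 : toL (polyF P) = 0
  · rw [h0]; rfl
  · unfold fnorm at h
    rw [if_neg h0] at h
    apply HahnSeries.coeff_eq_zero_of_lt_order
    by_contra hc
    push Not at hc
    have : (1 : ℝ) ≤ (Fintype.card K : ℝ) ^ (-(toL (polyF P)).order) :=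
      one_le_zpow₀ one_le_q (by omega)
    linarith

lemma aux_le_vnorm {ι : Type*} [Fintype ι] (v : ι → FF K) (i : ι) : fnorm (v i) ≤ vnorm v :=
  le_ciSup (f := fun i => fnorm (v i)) (Set.finite_range _).bddAbove i

lemma aux_vnorm_nonneg {ι : Type*} [Fintype ι] (v : ι → FF K) : 0 ≤ vnorm v :=
  Real.iSup_nonneg fun _ => fnorm_nonneg _

lemma aux_vnorm_sub_le {ι : Type*} [Fintype ι] (u v : ι → FF K) :
    vnorm (fun i => u i - v i) ≤ max (vnorm u) (vnorm v) := by
  refine Real.iSup_le (fun i => ?_) (le_max_of_le_left (aux_vnorm_nonneg u))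
  exact (aux_fnorm_sub_le _ _).trans (max_le_max (aux_le_vnorm u i) (aux_le_vnorm v i))

lemma aux_bdd {ι : Type*} [Fintype ι] (v : ι → FF K) :
    BddBelow (Set.range fun y : ι → Polynomial K => vnorm (fun i => v i - polyF (y i))) :=
  ⟨0, by rintro _ ⟨y, rfl⟩; exact aux_vnorm_nonneg _⟩

lemma aux_vdist_nonneg {ι : Type*} [Fintype ι] (v : ι → FF K) : 0 ≤ vdist v :=
  Real.iInf_nonneg fun _ => aux_vnorm_nonneg _

lemma aux_vdist_sub_le {ι : Type*} [Fintype ι] (u v : ι → FF K) :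
    vdist (u - v) ≤ max (vdist u) (vdist v) := by
  refine le_of_forall_gt_imp_ge_of_dense fun c hc => ?_
  obtain ⟨y, hy⟩ := exists_lt_of_ciInf_lt (lt_of_le_of_lt (le_max_left _ _) hc)
  obtain ⟨w, hw⟩ := exists_lt_of_ciInf_lt (lt_of_le_of_lt (le_max_right _ _) hc)
  refine (ciInf_le (aux_bdd (u - v)) (y - w)).trans ?_
  have := aux_vnorm_sub_le (fun i => u i - polyF (y i)) (fun i => v i - polyF (w i))
  refine le_trans (le_of_eq ?_) (this.trans (max_le hy.le hw.le))
  congr 1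
  funext i
  simp only [Pi.sub_apply, aux_polyF_sub]
  ring

lemma aux_vdist_zero {ι : Type*} [Fintype ι] (v : ι → FF K) (h : vdist v = 0) :
    ∃ y : ι → Polynomial K, v = fun i => polyF (y i) := by
  have key : ∀ c : ℝ, 0 < c → ∃ y : ι → Polynomial K,
      vnorm (fun i => v i - polyF (y i)) < c := fun c hc =>
    exists_lt_of_ciInf_lt (show vdist v < c by rw [h]; exact hc)
  obtain ⟨y, hy⟩ := key 1 one_pos
  refine ⟨y, ?_⟩
  funext i
  rw [← sub_eq_zero, ← fnorm_eq_zero]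
  refine le_antisymm (le_of_forall_gt_imp_ge_of_dense fun c hc => ?_) (fnorm_nonneg _)
  obtain ⟨w, hw⟩ := key (min c 1) (lt_min hc one_pos)
  have h1 := (aux_le_vnorm (fun i => v i - polyF (y i)) i).trans_lt hy
  have h2 := (aux_le_vnorm (fun i => v i - polyF (w i)) i).trans_lt hw
  have h3 : y i - w i = 0 := by
    apply aux_poly_small
    have e : polyF (y i - w i) = (v i - polyF (w i)) - (v i - polyF (y i)) := by
      rw [aux_polyF_sub]; ring
    rw [e]
    exact (aux_fnorm_sub_le _ _).trans_lt (max_lt (h2.trans_le (min_le_right _ _)) h1)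
  rw [sub_eq_zero.mp h3]
  exact (h2.trans_le (min_le_left _ _)).le

end Aux

end FPSDA

open FPSDA MeasureTheory

/-- If `θ` is not in `A 𝔽_q[z]^m + 𝔽_q[z]ⁿ`, then `ω̂(A, θ) ≤ ω(A)`. -/
theorem omegaHatInhom_le_omegaHom {K : Type*} [Field K] [Fintype K] {m n : ℕ}
    (hm : 0 < m) (hn : 0 < n)
    (A : Matrix (Fin n) (Fin m) (FF K)) (θ : Fin n → FF K)
    (hθ : ¬ ∃ (x : Fin m → Polynomial K) (y : Fin n → Polynomial K),
        θ = A.mulVec (fun j => polyF (x j)) + fun i => polyF (y i)) :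
    omegaHatInhom A θ ≤ omegaHom A := by
  refine iSup₂_le fun ω hω => ?_
  obtain ⟨H₀, hH₀⟩ := hω
  rcases le_or_gt ω 0 with h0 | h0
  · rw [ENNReal.ofReal_of_nonpos h0]; exact zero_le
  refine le_of_forall_lt_imp_le_of_dense fun c hc => ?_
  have hcfin : c ≠ ⊤ := ne_top_of_lt hc
  set η := c.toReal with hη
  have hcη : c = ENNReal.ofReal η := (ENNReal.ofReal_toReal hcfin).symm
  have hηω : η < ω := by
    rw [hcη] at hc
    exact (ENNReal.ofReal_lt_ofReal_iff h0).mp hc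
  rw [hcη]
  refine le_iSup₂_of_le η (fun H₁ => ?_) le_rfl
  set B : ℝ := (2 : ℝ) ^ (ω / (ω - η)) with hB
  set H : ℝ := max (max 1 H₀) (max H₁ B) with hH
  have hH1 : 1 ≤ H := (le_max_left _ _).trans (le_max_left _ _)
  have hHH₀ : H₀ ≤ H := (le_max_right _ _).trans (le_max_left _ _)
  have hHH₁ : H₁ ≤ H := (le_max_left _ _).trans (le_max_right _ _)
  have hHB : B ≤ H := (le_max_right _ _).trans (le_max_right _ _)
  obtain ⟨x, hx, hxn⟩ := hH₀ H hHH₀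
  set δ := vdist (A.mulVec (fun j => polyF (x j)) - θ) with hδ
  have hδpos : 0 < δ := by
    refine lt_of_le_of_ne (aux_vdist_nonneg _) fun h => hθ ?_
    obtain ⟨y, hy⟩ := aux_vdist_zero _ h.symm
    refine ⟨x, -y, ?_⟩
    funext i
    have h1 := congrFun hy i
    have h2 : polyF (-(y i)) = - polyF (y i) :=
      map_neg (Polynomial.aeval (HahnSeries.single (-1 : ℤ) (1 : K))) (y i)
    simp only [Pi.sub_apply] at h1
    simp only [Pi.add_apply, Pi.neg_apply]
    rw [h2, ← h1]
    ring
  set T : ℝ := δ ^ (-(1 / ω)) with hT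
  have hTδ : T ^ (-ω) = δ := by
    rw [hT, ← Real.rpow_mul hδpos.le]
    rw [show -(1 / ω) * -ω = 1 by field_simp, Real.rpow_one]
  have hTpos : 0 < T := Real.rpow_pos_of_pos hδpos _
  have hHT : H ≤ T := by
    by_contra hlt
    push Not at hlt
    have := Real.rpow_lt_rpow_of_neg hTpos hlt (neg_neg_of_pos h0)
    linarith
  have hT2 : T < 2 * T := by linarith
  obtain ⟨x', hx', hxn'⟩ := hH₀ (2 * T) (by linarith)
  have hlt : (2 * T) ^ (-ω) < δ := by
    have := Real.rpow_lt_rpow_of_neg hTpos hT2 (neg_neg_of_pos h0)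
    linarith
  refine ⟨2 * T, by linarith, x - x', ?_, ?_, ?_⟩
  · intro h
    rw [← sub_eq_zero.mp h] at hx'
    linarith
  · have e : A.mulVec (fun j => polyF ((x - x') j)) =
        (A.mulVec (fun j => polyF (x j)) - θ) - (A.mulVec (fun j => polyF (x' j)) - θ) := by
      rw [sub_sub_sub_cancel_right, ← Matrix.mulVec_sub]
      congr 1
      funext j
      simp only [Pi.sub_apply, aux_polyF_sub]
    rw [e]
    refine (aux_vdist_sub_le _ _).trans ((max_le le_rfl (hx'.trans hlt.le)).trans ?_)
    rw [← hTδ]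
    have hB2 : (2 : ℝ) ^ ω ≤ (2 * T) ^ (ω - η) := by
      have h3 : B ^ (ω - η) = 2 ^ ω := by
        rw [hB, ← Real.rpow_mul (by norm_num)]
        congr 1
        have : ω - η ≠ 0 := by linarith
        field_simp
      rw [← h3]
      exact Real.rpow_le_rpow (by positivity) (by linarith) (by linarith)
    have e1 : T ^ (-ω) = 2 ^ ω * (2 * T) ^ (-ω) := by
      rw [Real.mul_rpow (by norm_num) hTpos.le, ← mul_assoc, ← Real.rpow_add (by norm_num)]
      simp
    have e2 : (2 * T) ^ (-η) = (2 * T) ^ (ω - η) * (2 * T) ^ (-ω) := by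
      rw [← Real.rpow_add (by positivity)]
      congr 1
      ring
    rw [e1, e2]
    exact mul_le_mul_of_nonneg_right hB2 (by positivity)
  · unfold pnorm at *
    have := aux_vnorm_sub_le (fun j => polyF (x j)) (fun j => polyF (x' j))
    simp only [Pi.sub_apply, aux_polyF_sub]
    exact this.trans (max_le (by linarith) hxn')
end
end
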